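/- Let ρ : ℕ → ℝ be positive and nonincreasing with liminf_{N→∞} ρ(2N)/ρ(N) = γ₋ > 0 and limsup_{N→∞} ρ(2N)/ρ(N) = γ₊ < 1. Let S : ℕ → ℝ be positive and nondecreasing with liminf_{N→∞} S(2N)/S(N) = Γ₋ > 1. Define τ̄(N,n) = (ρ(N) - ρ(2N)) + σ²·(S(2N) - S(N))/n and A(N,n) = ρ(N) + σ²·S(N)/n for fixed σ > 0. Then there exists N₀ such that for all N ≥ N₀ and all n ≥ 1, τ̄(N,n) ≥ U·A(N,n), where U = min(1 - γ₊, Γ₋ - 1) (taking any U' < U if needed for strictness). -/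

import Mathlib

open Filter

/-!
The bias block of `τ̄` is compared with the bias term of `A`, and the variance block with the
variance term: past some `N₀` the ratio `ρ(2N)/ρ(N)` is below `γ₊ + ε` and `S(2N)/S(N)` is above
`Γ₋ - ε`. The sample size `n` enters only through the nonnegative weight `σ²/n` of the variance
parts, so the two comparisons, which involve `N` alone, give the claim for all `n` at once.
-/

section Ratio

variable {ι : Type*} {l : Filter ι} {f g : ι → ℝ} {c : ℝ}

theorem eventually_mul_le_sub_of_limsup_div_lt (hg : ∀ᶠ i in l, 0 < g i)
    (hbdd : IsBoundedUnder (· ≤ ·) l fun i ↦ f i / g i)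
    (hc : limsup (fun i ↦ f i / g i) l < 1 - c) :
    ∀ᶠ i in l, c * g i ≤ g i - f i := by
  filter_upwards [hg, eventually_lt_of_limsup_lt hc hbdd] with i hgi hratio
  have hf : f i < (1 - c) * g i := (div_lt_iff₀ hgi).1 hratio
  linarith

theorem eventually_mul_le_sub_of_lt_liminf_div (hg : ∀ᶠ i in l, 0 < g i)
    (hbdd : IsBoundedUnder (· ≥ ·) l fun i ↦ f i / g i)
    (hc : 1 + c < liminf (fun i ↦ f i / g i) l) :
    ∀ᶠ i in l, c * g i ≤ f i - g i := by
  filter_upwards [hg, eventually_lt_of_lt_liminf hc hbdd] with i hgi hratio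
  have hf : (1 + c) * g i < f i := (lt_div_iff₀ hgi).1 hratio
  linarith

theorem isBoundedUnder_le_comp_div_of_antitone [Preorder ι] {d : ι → ι} (hf : Antitone f)
    (hf_nonneg : ∀ i, 0 ≤ f i) (hd : ∀ i, i ≤ d i) :
    IsBoundedUnder (· ≤ ·) l fun i ↦ f (d i) / f i :=
  isBoundedUnder_of ⟨1, fun i ↦ div_le_one_of_le₀ (hf (hd i)) (hf_nonneg i)⟩

end Ratio

theorem stmt3_general {ι : Type*} {l : Filter ι} (d : ι → ι) {ρ S : ι → ℝ} {γp Γm ε : ℝ}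
    (hρpos : ∀ N, 0 < ρ N) (hSpos : ∀ N, 0 < S N)
    (hρbdd : IsBoundedUnder (· ≤ ·) l fun N ↦ ρ (d N) / ρ N)
    (hγp : limsup (fun N ↦ ρ (d N) / ρ N) l = γp)
    (hΓm : liminf (fun N ↦ S (d N) / S N) l = Γm) (hε : 0 < ε) :
    ∀ᶠ N in l, ∀ v : ℝ, 0 ≤ v →
      (min (1 - γp) (Γm - 1) - ε) * (ρ N + v * S N) ≤
        (ρ N - ρ (d N)) + v * (S (d N) - S N) := by
  set c := min (1 - γp) (Γm - 1) - ε
  have hbias : ∀ᶠ N in l, c * ρ N ≤ ρ N - ρ (d N) :=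
    eventually_mul_le_sub_of_limsup_div_lt (.of_forall hρpos) hρbdd
      (by linarith [min_le_left (1 - γp) (Γm - 1)])
  have hSbdd : IsBoundedUnder (· ≥ ·) l fun N ↦ S (d N) / S N :=
    isBoundedUnder_of ⟨0, fun N ↦ (div_pos (hSpos (d N)) (hSpos N)).le⟩
  have hvariance : ∀ᶠ N in l, c * S N ≤ S (d N) - S N :=
    eventually_mul_le_sub_of_lt_liminf_div (.of_forall hSpos) hSbdd
      (by linarith [min_le_right (1 - γp) (Γm - 1)])
  filter_upwards [hbias, hvariance] with N hbiasN hvarianceN v hv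
  calc c * (ρ N + v * S N) = c * ρ N + v * (c * S N) := by ring
    _ ≤ (ρ N - ρ (d N)) + v * (S (d N) - S N) := by gcongr

/-- Key comparison for Theorem 1: for every `ε > 0` there is `N₀` such that for
`N ≥ N₀` and all `n ≥ 1`, the expected criterion
`τ̄(N,n) = (ρ(N) - ρ(2N)) + σ²(S(2N) - S(N))/n` dominates
`(min(1-γ₊, Γ₋-1) - ε) · A(N,n)`, where `A(N,n) = ρ(N) + σ² S(N)/n`. -/
theorem stmt3 (ρ S : ℕ → ℝ) (σ γm γp Γm : ℝ) (hσ : 0 < σ)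
    (hρpos : ∀ N, 0 < ρ N) (hρmono : ∀ N, ρ (N + 1) ≤ ρ N)
    (hSpos : ∀ N, 0 < S N) (hSmono : ∀ N, S N ≤ S (N + 1))
    (hγm : Filter.liminf (fun N : ℕ => ρ (2 * N) / ρ N) atTop = γm) (hγmpos : 0 < γm)
    (hγp : Filter.limsup (fun N : ℕ => ρ (2 * N) / ρ N) atTop = γp) (hγp1 : γp < 1)
    (hΓm : Filter.liminf (fun N : ℕ => S (2 * N) / S N) atTop = Γm) (hΓm1 : 1 < Γm)
    (τbar A : ℕ → ℕ → ℝ)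
    (hτ : ∀ N n, τbar N n = (ρ N - ρ (2 * N)) + σ ^ 2 * (S (2 * N) - S N) / (n : ℝ))
    (hA : ∀ N n, A N n = ρ N + σ ^ 2 * S N / (n : ℝ)) :
    ∀ ε : ℝ, 0 < ε → ∃ N₀ : ℕ, ∀ N : ℕ, N₀ ≤ N → ∀ n : ℕ, 1 ≤ n →
      (min (1 - γp) (Γm - 1) - ε) * A N n ≤ τbar N n := by
  intro ε hε
  have hρbdd : IsBoundedUnder (· ≤ ·) atTop fun N ↦ ρ (2 * N) / ρ N :=
    isBoundedUnder_le_comp_div_of_antitone (antitone_nat_of_succ_le hρmono)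
      (fun N ↦ (hρpos N).le) (fun N ↦ by omega)
  refine eventually_atTop.1 <|
    (stmt3_general (2 * ·) hρpos hSpos hρbdd hγp hΓm hε).mono fun N h n _ ↦ ?_
  simpa only [hτ, hA, mul_div_right_comm] using h (σ ^ 2 / n) (by positivity)
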